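/- Let σ be a cone in N_ℝ of dimension k+1 mapping under p onto a cone τ of dimension k in Q_ℝ, where p: N_ℝ → Q_ℝ has kernel L_ℝ and faces of σ map onto faces of τ. Then span(σ) ∩ L_ℝ is one-dimensional, and σ has exactly one or exactly two faces mapping isomorphically onto τ. -/

import Mathlib

open Set

/-- The standard integer lattice (as a set) in `Fin n → ℝ`. -/
def lattSet (n : ℕ) : Set (Fin n → ℝ) := {x | ∀ i, ∃ m : ℤ, x i = m}

/-- The convex cone generated by a finite set of vectors. -/
def coneGen {V : Type*} [AddCommGroup V] [Module ℝ V] (s : Finset V) : Set V :=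
  {x | ∃ c : V → ℝ, (∀ v, 0 ≤ c v) ∧ x = ∑ v ∈ s, c v • v}

/-- A (finitely generated) polyhedral convex cone. -/
def IsPolyCone {V : Type*} [AddCommGroup V] [Module ℝ V] (C : Set V) : Prop :=
  ∃ s : Finset V, C = coneGen s

/-- A rational polyhedral cone: generated by finitely many lattice vectors. -/
def IsRatPolyCone {n : ℕ} (C : Set (Fin n → ℝ)) : Prop :=
  ∃ s : Finset (Fin n → ℝ), (↑s : Set (Fin n → ℝ)) ⊆ lattSet n ∧ C = coneGen s

/-- `F` is a face of the cone `σ`: a subcone such that whenever a sum of two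
elements of `σ` lies in `F`, both elements lie in `F`. -/
def IsFace {V : Type*} [AddCommGroup V] [Module ℝ V] (σ F : Set V) : Prop :=
  F ⊆ σ ∧ ∀ x ∈ σ, ∀ y ∈ σ, x + y ∈ F → x ∈ F ∧ y ∈ F

/-- A fan: a collection of strongly convex polyhedral cones such that the
intersection of any two members is a member and is a face of each. -/
def IsFan {V : Type*} [AddCommGroup V] [Module ℝ V] (F : Set (Set V)) : Prop :=
  (∀ C ∈ F, IsPolyCone C) ∧
  (∀ C ∈ F, ∀ x ∈ C, -x ∈ C → x = 0) ∧
  (∀ C ∈ F, ∀ D ∈ F, C ∩ D ∈ F ∧ IsFace C (C ∩ D) ∧ IsFace D (C ∩ D))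

/-!
Let `e` be a point in the relative interior of the cone `C`. Sending `w` to the smallest face of
`C` containing `w` identifies the extreme points of the fibre `C ∩ p ⁻¹' {p e}` with the faces that
`p` maps isomorphically onto `p '' C`. Extremality of `w` is what makes `p` injective on its
smallest face `F`; and `p '' F`, being a face of `p '' C` through the relatively interior point
`p e`, is all of `p '' C`. In relative dimension one the fibre lies on a line, so it has at most two
extreme points. It has at least one because a salient finitely generated cone carries a linear
functional that is positive on its generators and hence has compact sublevel sets, to which the
Krein–Milman theorem applies.
-/

section OrderedField

variable {𝕜 E : Type*} [Field 𝕜] [LinearOrder 𝕜] [IsStrictOrderedRing 𝕜] [AddCommGroup E]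
  [Module 𝕜 E]

theorem eq_zero_of_mem_extremePoints {s : Set E} {w d : E} (hw : w ∈ s.extremePoints 𝕜)
    (hadd : w + d ∈ s) (hsub : w - d ∈ s) : d = 0 := by
  have hmid : w ∈ openSegment 𝕜 (w + d) (w - d) :=
    ⟨1 / 2, 1 / 2, by norm_num, by norm_num, by norm_num, by module⟩
  simpa using hw.2 hadd hsub hmid

theorem encard_extremePoints_le_two_of_collinear {s : Set E} (hs : Collinear 𝕜 s) :
    (s.extremePoints 𝕜).encard ≤ 2 := by
  by_contra! h
  obtain ⟨t, ht, hcard⟩ := exists_subset_encard_eq (k := 3) (Order.add_one_le_of_lt h)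
  obtain ⟨x, y, z, hxy, hxz, hyz, rfl⟩ := encard_eq_three.1 hcard
  have hext : ∀ v ∈ ({x, y, z} : Set E), ∀ a ∈ s, ∀ b ∈ s, Wbtw 𝕜 a v b → a = v ∨ b = v :=
    fun v hv a ha b hb h => (mem_extremePoints_iff_forall_segment.1 (ht hv)).2 a ha b hb
      (mem_segment_iff_wbtw.2 h)
  have hsub : ({x, y, z} : Set E) ⊆ s := ht.trans extremePoints_subset
  rcases (hs.subset hsub).wbtw_or_wbtw_or_wbtw with h | h | h <;> grind

theorem convex_sdiff_zero_of_salient {C : PointedCone 𝕜 E} (hC : C.toConvexCone.Salient) :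
    Convex 𝕜 ((C : Set E) \ {0}) := by
  rintro x ⟨hx, hx₀⟩ y ⟨hy, hy₀⟩ a b ha hb hab
  refine ⟨C.convex hx hy ha hb hab, fun hzero => ?_⟩
  have hax : a • x = 0 := by
    by_contra hne
    refine hC _ (C.smul_mem ha hx) hne ?_
    rw [neg_eq_of_add_eq_zero_right hzero]
    exact C.smul_mem hb hy
  have hby : b • y = 0 := by simpa [hax] using hzero
  obtain rfl : a = 0 := (smul_eq_zero.1 hax).resolve_right hx₀
  obtain rfl : b = 0 := (smul_eq_zero.1 hby).resolve_right hy₀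
  simp at hab

end OrderedField

theorem collinear_inter_preimage_singleton {K V W : Type*} [DivisionRing K] [AddCommGroup V]
    [Module K V] [AddCommGroup W] [Module K W] {p : V →ₗ[K] W} {s : Set V}
    (h : Module.rank K ↥(Submodule.span K s ⊓ LinearMap.ker p) ≤ 1) (q : W) :
    Collinear K (s ∩ p ⁻¹' {q}) := by
  refine (Submodule.rank_mono (Submodule.span_le.2 ?_)).trans h
  rintro _ ⟨x, ⟨hx, hxq⟩, y, ⟨hy, hyq⟩, rfl⟩
  refine ⟨sub_mem (Submodule.subset_span hx) (Submodule.subset_span hy), ?_⟩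
  simp_all

theorem finrank_inf_ker_add_finrank_map {K V W : Type*} [DivisionRing K] [AddCommGroup V]
    [Module K V] [AddCommGroup W] [Module K W] (p : V →ₗ[K] W) (S : Submodule K V)
    [FiniteDimensional K S] :
    Module.finrank K ↥(S ⊓ LinearMap.ker p) + Module.finrank K (S.map p) = Module.finrank K S := by
  rw [← LinearMap.finrank_range_add_finrank_ker (p.domRestrict S), LinearMap.range_domRestrict,
    LinearMap.ker_domRestrict, add_comm, ← Submodule.finrank_map_subtype_eq S,
    Submodule.map_comap_subtype]

section Faces

variable {V : Type*} [AddCommGroup V] [Module ℝ V] {σ F : Set V} {C : PointedCone ℝ V} {w x y : V}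

namespace IsFace

theorem mem_of_sub_mem (hF : IsFace σ F) (hy : y ∈ F) (hx : x ∈ σ) (hyx : y - x ∈ σ) : x ∈ F :=
  (hF.2 x hx (y - x) hyx (by rwa [add_sub_cancel])).1

theorem smul_mem_of_le_one (hF : IsFace (C : Set V) F) (hx : x ∈ F) {r : ℝ} (hr₀ : 0 ≤ r)
    (hr₁ : r ≤ 1) : r • x ∈ F := by
  refine hF.mem_of_sub_mem hx (C.smul_mem hr₀ (hF.1 hx)) ?_
  simpa [sub_smul] using C.smul_mem (sub_nonneg.2 hr₁) (hF.1 hx)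

end IsFace

/-- The smallest face of the cone `C` containing `w ∈ C`: the elements of `C` lying below a multiple
of `w` in the preorder defined by `C`. The equation `minimalFace C w = C` says that `w` lies in the
relative interior of `C`. -/
def minimalFace (C : PointedCone ℝ V) (w : V) : PointedCone ℝ V where
  carrier := {x | x ∈ C ∧ ∃ r : ℝ, 0 ≤ r ∧ r • w - x ∈ C}
  zero_mem' := ⟨C.zero_mem, 0, le_rfl, by simp⟩
  add_mem' := by
    rintro x y ⟨hx, r, hr, hrx⟩ ⟨hy, t, ht, hty⟩
    refine ⟨C.add_mem hx hy, r + t, add_nonneg hr ht, ?_⟩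
    rw [add_smul, add_sub_add_comm]
    exact C.add_mem hrx hty
  smul_mem' := by
    rintro c x ⟨hx, r, hr, hrx⟩
    refine ⟨Submodule.smul_mem C c hx, c * r, mul_nonneg c.2 hr, ?_⟩
    have : ((c : ℝ) * r) • w - c • x = c • (r • w - x) := by
      rw [smul_sub, mul_smul]; rfl
    rw [this]
    exact Submodule.smul_mem C c hrx

theorem self_mem_minimalFace (hw : w ∈ C) : w ∈ minimalFace C w :=
  ⟨hw, 1, zero_le_one, by simp⟩

theorem isFace_minimalFace (C : PointedCone ℝ V) (w : V) :
    IsFace (C : Set V) (minimalFace C w) := by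
  refine ⟨fun x hx => hx.1, ?_⟩
  rintro x hx y hy ⟨-, r, hr, hxy⟩
  refine ⟨⟨hx, r, hr, ?_⟩, hy, r, hr, ?_⟩
  · simpa [← sub_sub] using C.add_mem hxy hy
  · simpa [sub_add_eq_sub_sub_swap] using C.add_mem hxy hx

theorem exists_minimalFace_eq (hC : C.FG) : ∃ e ∈ C, minimalFace C e = C := by
  classical
  obtain ⟨s, rfl⟩ := hC
  have hs : ∀ v ∈ s, v ∈ PointedCone.hull ℝ (s : Set V) := fun v hv => Submodule.subset_span hv
  refine ⟨∑ v ∈ s, v, sum_mem hs, le_antisymm (fun x hx => hx.1) (Submodule.span_le.2 ?_)⟩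
  intro v hv
  refine ⟨hs v hv, 1, zero_le_one, ?_⟩
  rw [one_smul, ← Finset.add_sum_erase s (fun v => v) hv, add_sub_cancel_left]
  exact sum_mem fun u hu => hs u (Finset.mem_of_mem_erase hu)

end Faces

section IsoFaces

variable {V W : Type*} [AddCommGroup V] [Module ℝ V] [AddCommGroup W] [Module ℝ W]
  {p : V →ₗ[ℝ] W} {C : PointedCone ℝ V} {F : Set V} {w e : V} {q : W}

/-- The faces of the cone `σ` that `p` maps isomorphically onto the image of `σ`. On a cone `F`,
injectivity of `p` is the same as injectivity of `p` on the linear span of `F`. -/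
def isoFaces (p : V →ₗ[ℝ] W) (σ : Set V) : Set (Set V) :=
  {F | IsFace σ F ∧ InjOn p F ∧ p '' F = p '' σ}

theorem injOn_minimalFace (hw : w ∈ ((C : Set V) ∩ p ⁻¹' {q}).extremePoints ℝ) :
    InjOn p (minimalFace C w) := by
  rintro x ⟨hx, r, hr, hrx⟩ y ⟨hy, t, ht, hty⟩ hxy
  obtain ⟨hwC, hwq⟩ := hw.1
  -- As `x` and `y` lie below `u • w` and have the same image, `w ± u⁻¹ • (x - y)` lie in the fibre.
  set u : ℝ := r + t + 1
  have hu₀ : 0 < u := by positivity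
  have hux : u • w - x ∈ C := by
    convert C.add_mem hrx (C.smul_mem (add_nonneg ht zero_le_one) hwC) using 1
    module
  have huy : u • w - y ∈ C := by
    convert C.add_mem hty (C.smul_mem (add_nonneg hr zero_le_one) hwC) using 1
    module
  have mem_fibre : ∀ {a b : V}, a ∈ C → u • w - b ∈ C → p a = p b →
      w + u⁻¹ • (a - b) ∈ (C : Set V) ∩ p ⁻¹' {q} := by
    intro a b ha hb hab
    refine ⟨?_, by simpa [hab] using hwq⟩
    have : w + u⁻¹ • (a - b) = u⁻¹ • (a + (u • w - b)) := by
      rw [add_sub_left_comm, smul_add, inv_smul_smul₀ hu₀.ne']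
    rw [this]
    exact C.smul_mem (inv_nonneg.2 hu₀.le) (C.add_mem ha hb)
  have hzero : u⁻¹ • (x - y) = 0 := by
    refine eq_zero_of_mem_extremePoints hw (mem_fibre hx huy hxy) ?_
    rw [sub_eq_add_neg, ← smul_neg, neg_sub]
    exact mem_fibre hy hux hxy.symm
  exact sub_eq_zero.1 ((smul_eq_zero_iff_right (inv_ne_zero hu₀.ne')).1 hzero)

theorem image_minimalFace_eq (he : minimalFace C e = C) (hw : w ∈ C) (hwe : p w = p e)
    (hface : IsFace (p '' C) (p '' minimalFace C w)) : p '' minimalFace C w = p '' C := by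
  refine hface.1.antisymm ?_
  rintro _ ⟨x, hx, rfl⟩
  obtain ⟨-, r, hr, hrx⟩ : x ∈ minimalFace C e := he.symm ▸ hx
  refine hface.mem_of_sub_mem (y := p (r • w)) ?_ ⟨x, hx, rfl⟩ ⟨r • e - x, hrx, by simp [hwe]⟩
  exact mem_image_of_mem p ((minimalFace C w).smul_mem hr (self_mem_minimalFace hw))

theorem IsFace.mem_extremePoints_fibre (hF : IsFace (C : Set V) F) (hinj : InjOn p F)
    (hw : w ∈ F) : w ∈ ((C : Set V) ∩ p ⁻¹' {p w}).extremePoints ℝ := by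
  refine ⟨⟨hF.1 hw, rfl⟩, ?_⟩
  rintro x ⟨hx, hxw⟩ y ⟨hy, -⟩ ⟨a, b, ha, hb, hab, hxy⟩
  have hax : a • x ∈ F :=
    (hF.2 _ (C.smul_mem ha.le hx) _ (C.smul_mem hb.le hy) (hxy ▸ hw)).1
  have haw : a • w ∈ F := hF.smul_mem_of_le_one hw ha.le (by linarith)
  refine smul_right_injective V ha.ne' (hinj hax haw ?_)
  rw [map_smul, map_smul, hxw]

theorem smul_mem_of_mem_isoFaces (hF : F ∈ isoFaces p C) (hw : w ∈ F) {r : ℝ} (hr : 0 ≤ r) :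
    r • w ∈ F := by
  obtain ⟨hface, hinj, himg⟩ := hF
  rcases le_or_gt r 1 with hr₁ | hr₁
  · exact hface.smul_mem_of_le_one hw hr hr₁
  -- A preimage of `r • p w` in `F` scales down to one of `p w`, which can only be `w`.
  obtain ⟨c, hc, hcw⟩ : p (r • w) ∈ p '' F :=
    himg ▸ mem_image_of_mem p (C.smul_mem hr (hface.1 hw))
  have hr₀ : r ≠ 0 := (zero_lt_one.trans hr₁).ne'
  have hcF : r⁻¹ • c ∈ F :=
    hface.smul_mem_of_le_one hc (inv_nonneg.2 hr) (inv_le_one_of_one_le₀ hr₁.le)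
  have hcw' : r⁻¹ • c = w := hinj hcF hw (by rw [map_smul, hcw, map_smul, inv_smul_smul₀ hr₀])
  rwa [← hcw', smul_inv_smul₀ hr₀]

theorem minimalFace_subset_of_mem_isoFaces (hF : F ∈ isoFaces p C) (hw : w ∈ F) :
    (minimalFace C w : Set V) ⊆ F := by
  rintro x ⟨hx, r, hr, hrx⟩
  exact hF.1.mem_of_sub_mem (smul_mem_of_mem_isoFaces hF hw hr) hx hrx

theorem bijOn_minimalFace (p : V →ₗ[ℝ] W) (heC : e ∈ C) (he : minimalFace C e = C)
    (hfaces : ∀ F : PointedCone ℝ V, IsFace (C : Set V) F → IsFace (p '' C) (p '' F)) :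
    BijOn (fun w => (minimalFace C w : Set V)) (((C : Set V) ∩ p ⁻¹' {p e}).extremePoints ℝ)
      (isoFaces p C) := by
  have mem_isoFaces : ∀ {w}, w ∈ ((C : Set V) ∩ p ⁻¹' {p e}).extremePoints ℝ →
      (minimalFace C w : Set V) ∈ isoFaces p C := fun {w} hw =>
    ⟨isFace_minimalFace C w, injOn_minimalFace hw,
      image_minimalFace_eq he hw.1.1 hw.1.2 (hfaces _ (isFace_minimalFace C w))⟩
  refine ⟨fun w => mem_isoFaces, ?_, ?_⟩
  · intro w hw w' hw' (hww' : (minimalFace C w : Set V) = minimalFace C w')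
    have hmem : w ∈ (minimalFace C w' : Set V) := hww' ▸ self_mem_minimalFace hw.1.1
    exact injOn_minimalFace hw' hmem (self_mem_minimalFace hw'.1.1) (hw.1.2.trans hw'.1.2.symm)
  · intro F hF
    obtain ⟨w, hw, hwe⟩ : p e ∈ p '' F := hF.2.2 ▸ mem_image_of_mem p heC
    have hext := hwe ▸ hF.1.mem_extremePoints_fibre hF.2.1 hw
    refine ⟨w, hext, ?_⟩
    rw [← hF.2.1.image_eq_image_iff (minimalFace_subset_of_mem_isoFaces hF hw) Subset.rfl]
    exact (mem_isoFaces hext).2.2.trans hF.2.2.symm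

end IsoFaces

section ExtremePoints

open PointedCone

theorem exists_t2_locallyConvexSpace (V : Type*) [AddCommGroup V] [Module ℝ V] :
    ∃ _ : TopologicalSpace V, IsTopologicalAddGroup V ∧ ContinuousSMul ℝ V ∧
      LocallyConvexSpace ℝ V ∧ T2Space V := by
  let b := Module.Basis.ofVectorSpace ℝ V
  let f : V →ₗ[ℝ] (_ → ℝ) := Finsupp.lcoeFun ∘ₗ b.repr.toLinearMap
  have hf : Function.Injective f := DFunLike.coe_injective.comp b.repr.injective
  let _ : TopologicalSpace V := .induced f inferInstance
  exact ⟨_, topologicalAddGroup_induced f, continuousSMul_induced f, .induced f,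
    (Topology.IsEmbedding.mk ⟨rfl⟩ hf).t2Space⟩

variable {V : Type*} [AddCommGroup V] [Module ℝ V]

section Topology

variable [TopologicalSpace V] [IsTopologicalAddGroup V] [ContinuousSMul ℝ V]

theorem isCompact_hull_inter_le {s : Finset V} {f : StrongDual ℝ V} (hf : ∀ v ∈ s, 0 < f v)
    (c : ℝ) : IsCompact {x | x ∈ hull ℝ (s : Set V) ∧ f x ≤ c} := by
  let φ : (s → ℝ) → V := fun a => ∑ v, a v • (v : V)
  have hφ : Continuous φ := by fun_prop
  have hbox : IsCompact (φ '' Icc 0 fun v => c / f v) := isCompact_Icc.image hφ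
  convert hbox.inter_right (isClosed_Iic.preimage f.continuous : IsClosed (f ⁻¹' Iic c)) using 1
  ext x
  refine and_congr_left fun hxc : f x ≤ c => ⟨fun hx => ?_, ?_⟩
  · obtain ⟨a, rfl⟩ := Submodule.mem_span_finset'.1 hx
    refine ⟨fun v => a v, ⟨fun v => (a v).2, fun v => ?_⟩, rfl⟩
    have hterm : ∀ u : s, f (a u • (u : V)) = a u * f u := fun u => map_smul f (a u : ℝ) (u : V)
    have hnonneg : ∀ u : s, 0 ≤ f (a u • (u : V)) := fun u =>
      (hterm u).symm ▸ mul_nonneg (a u).2 (hf u u.2).le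
    rw [le_div_iff₀ (hf v v.2)]
    calc (a v : ℝ) * f v = f (a v • (v : V)) := (hterm v).symm
      _ ≤ ∑ u, f (a u • (u : V)) :=
        Finset.single_le_sum (f := fun u => f (a u • (u : V))) (fun u _ => hnonneg u)
          (Finset.mem_univ v)
      _ = f (∑ u, a u • (u : V)) := (map_sum f _ _).symm
      _ ≤ c := hxc
  · rintro ⟨a, ha, rfl⟩
    exact sum_mem fun v _ => (hull ℝ (s : Set V)).smul_mem (ha.1 v) (subset_hull v.2)

variable [LocallyConvexSpace ℝ V] [T2Space V]

theorem exists_hull_eq_forall_pos {C : PointedCone ℝ V} (hC : C.FG)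
    (hsal : C.toConvexCone.Salient) :
    ∃ (s : Finset V) (f : StrongDual ℝ V), hull ℝ (s : Set V) = C ∧ ∀ v ∈ s, 0 < f v := by
  classical
  obtain ⟨t, rfl⟩ := hC
  set C := hull ℝ (t : Set V)
  have hhull : hull ℝ ((t.erase 0 : Finset V) : Set V) = C := by
    rw [Finset.coe_erase]
    exact Submodule.span_sdiff_singleton_zero
  have hsub : convexHull ℝ ((t.erase 0 : Finset V) : Set V) ⊆ (C : Set V) \ {0} :=
    convexHull_min (fun v hv => ⟨hhull ▸ subset_hull hv, Finset.ne_of_mem_erase hv⟩)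
      (convex_sdiff_zero_of_salient hsal)
  obtain ⟨f, u, hu, hf⟩ := geometric_hahn_banach_point_closed (convex_convexHull ℝ _)
    ((t.erase 0).finite_toSet.isCompact_convexHull ℝ).isClosed fun h => (hsub h).2 rfl
  refine ⟨t.erase 0, f, hhull, fun v hv => ?_⟩
  rw [map_zero] at hu
  exact hu.trans (hf v (subset_convexHull ℝ _ hv))

theorem extremePoints_nonempty_of_isCompact_sublevel {P : Set V} (f : StrongDual ℝ V)
    (hP : ∀ c, IsCompact {x ∈ P | f x ≤ c}) (hne : P.Nonempty) :
    (P.extremePoints ℝ).Nonempty := by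
  obtain ⟨x₀, hx₀⟩ := hne
  obtain ⟨m, ⟨hmP, hm₀⟩, hm⟩ :=
    (hP (f x₀)).exists_isMinOn ⟨x₀, hx₀, le_rfl⟩ f.continuous.continuousOn
  have hmin : ∀ x ∈ P, f m ≤ f x := fun x hx =>
    (le_total (f x) (f x₀)).elim (fun h => hm ⟨hx, h⟩) hm₀.trans
  have hexp : IsExposed ℝ P {x ∈ P | f x ≤ f m} := by
    refine fun _ => ⟨-f, ?_⟩
    ext x
    simp only [mem_ofPred_eq, neg_apply, neg_le_neg_iff]
    exact and_congr_right fun _ => ⟨fun h y hy => h.trans (hmin y hy), fun h => h m hmP⟩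
  exact ((hP (f m)).extremePoints_nonempty ⟨m, hmP, le_rfl⟩).mono
    hexp.isExtreme.extremePoints_subset_extremePoints

end Topology

theorem extremePoints_fibre_nonempty {W : Type*} [AddCommGroup W] [Module ℝ W]
    {C : PointedCone ℝ V} (hC : C.FG) (hsal : C.toConvexCone.Salient) {p : V →ₗ[ℝ] W} {q : W}
    (hne : ((C : Set V) ∩ p ⁻¹' {q}).Nonempty) :
    (((C : Set V) ∩ p ⁻¹' {q}).extremePoints ℝ).Nonempty := by
  obtain ⟨_, _, _, _, _⟩ := exists_t2_locallyConvexSpace V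
  obtain ⟨s, f, rfl, hf⟩ := exists_hull_eq_forall_pos hC hsal
  obtain ⟨x₀, hx₀, hx₀q⟩ := id hne
  refine extremePoints_nonempty_of_isCompact_sublevel f (fun c => ?_) hne
  have hclosed : IsClosed ((fun x => x - x₀) ⁻¹'
      (Submodule.span ℝ (s : Set V) ⊓ LinearMap.ker p : Submodule ℝ V)) :=
    (Submodule.closed_of_finiteDimensional _).preimage (by fun_prop)
  convert (isCompact_hull_inter_le hf c).inter_right hclosed using 1
  ext x
  have hmem : x ∈ hull ℝ (s : Set V) → x - x₀ ∈ Submodule.span ℝ (s : Set V) := fun hx =>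
    sub_mem (hull_le_span ℝ _ hx) (hull_le_span ℝ _ hx₀)
  have hker : p x = q ↔ x - x₀ ∈ LinearMap.ker p := by
    rw [LinearMap.sub_mem_ker_iff, hx₀q]
  constructor
  · rintro ⟨⟨hx, hxq⟩, hxc⟩
    exact ⟨⟨hx, hxc⟩, hmem hx, hker.1 hxq⟩
  · rintro ⟨⟨hx, hxc⟩, -, hxk⟩
    exact ⟨⟨hx, hker.2 hxk⟩, hxc⟩

end ExtremePoints

section RelativeDimensionOne

variable {V W : Type*} [AddCommGroup V] [Module ℝ V] [AddCommGroup W] [Module ℝ W]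

theorem coneGen_eq_hull (s : Finset V) : coneGen s = (PointedCone.hull ℝ (s : Set V) : Set V) := by
  ext x
  constructor
  · rintro ⟨c, hc, rfl⟩
    exact sum_mem fun v hv => PointedCone.smul_mem _ (hc v) (PointedCone.subset_hull hv)
  · intro hx
    obtain ⟨c, -, rfl⟩ := Submodule.mem_span_finset.1 hx
    exact ⟨fun v => c v, fun v => (c v).2, rfl⟩

theorem IsPolyCone.exists_pointedCone {σ : Set V} (hσ : IsPolyCone σ) :
    ∃ C : PointedCone ℝ V, C.FG ∧ (C : Set V) = σ := by
  obtain ⟨s, rfl⟩ := hσ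
  exact ⟨_, ⟨s, rfl⟩, (coneGen_eq_hull s).symm⟩

theorem IsRatPolyCone.isPolyCone {n : ℕ} {σ : Set (Fin n → ℝ)} (hσ : IsRatPolyCone σ) :
    IsPolyCone σ :=
  hσ.imp fun _ => And.right

theorem ncard_isoFaces_eq_one_or_two {C : PointedCone ℝ V} (hC : C.FG)
    (hsal : C.toConvexCone.Salient) (p : V →ₗ[ℝ] W)
    (hrank : Module.rank ℝ ↥(Submodule.span ℝ (C : Set V) ⊓ LinearMap.ker p) ≤ 1)
    (hfaces : ∀ F : PointedCone ℝ V, IsFace (C : Set V) F → IsFace (p '' C) (p '' F)) :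
    (isoFaces p C).ncard = 1 ∨ (isoFaces p C).ncard = 2 := by
  obtain ⟨e, he, hminimal⟩ := exists_minimalFace_eq hC
  rw [← (bijOn_minimalFace p he hminimal hfaces).ncard_eq]
  obtain ⟨hfin, hle⟩ := (encard_le_coe_iff_finite_ncard_le (k := 2)).1
    (encard_extremePoints_le_two_of_collinear (collinear_inter_preimage_singleton hrank (p e)))
  have hpos := (ncard_pos hfin).2 (extremePoints_fibre_nonempty hC hsal ⟨e, he, rfl⟩)
  omega

end RelativeDimensionOne

theorem relative_dimension_one_faces_general {V W : Type*} [AddCommGroup V] [Module ℝ V]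
    [AddCommGroup W] [Module ℝ W] {k : ℕ} (p : V →ₗ[ℝ] W) (σ : Set V) (τ : Set W)
    (hσ : IsPolyCone σ) (hσsc : ∀ x ∈ σ, -x ∈ σ → x = 0) (himg : p '' σ = τ)
    (hdimσ : Module.finrank ℝ (Submodule.span ℝ σ) = k + 1)
    (hdimτ : Module.finrank ℝ (Submodule.span ℝ τ) = k)
    (hfaces : ∀ F : PointedCone ℝ V, IsFace σ F → IsFace τ (p '' F)) :
    Module.finrank ℝ ↥(Submodule.span ℝ σ ⊓ LinearMap.ker p) = 1 ∧
    ({τ' | IsFace σ τ' ∧ Set.InjOn p τ' ∧ p '' τ' = τ}.ncard = 1 ∨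
     {τ' | IsFace σ τ' ∧ Set.InjOn p τ' ∧ p '' τ' = τ}.ncard = 2) := by
  subst himg
  obtain ⟨C, hC, rfl⟩ := hσ.exists_pointedCone
  have : FiniteDimensional ℝ (Submodule.span ℝ (C : Set V)) :=
    Module.finite_of_finrank_pos (by omega)
  have hker : Module.finrank ℝ ↥(Submodule.span ℝ (C : Set V) ⊓ LinearMap.ker p) = 1 := by
    have hsum := finrank_inf_ker_add_finrank_map p (Submodule.span ℝ (C : Set V))
    rw [Submodule.map_span, hdimτ, hdimσ] at hsum
    omega
  exact ⟨hker, ncard_isoFaces_eq_one_or_two hC (fun x hx hx₀ hneg => hx₀ (hσsc x hx hneg)) p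
    (Module.rank_eq_one_iff_finrank_eq_one.2 hker).le hfaces⟩

/-- if the strongly convex rational polyhedral cone `σ` of dimension `k+1`
maps under `p` onto the cone `τ` of dimension `k`, with faces of `σ` mapping onto faces
of `τ`, then `span(σ) ∩ ker p` is one-dimensional and `σ` has exactly one or exactly two
faces mapping isomorphically onto `τ`. -/
theorem relative_dimension_one_faces {n m k : ℕ}
    (p : (Fin n → ℝ) →ₗ[ℝ] (Fin m → ℝ))
    (σ : Set (Fin n → ℝ)) (τ : Set (Fin m → ℝ))
    (hσ : IsRatPolyCone σ) (hτ : IsRatPolyCone τ)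
    (hσsc : ∀ x ∈ σ, -x ∈ σ → x = 0) (hτsc : ∀ y ∈ τ, -y ∈ τ → y = 0)
    (himg : p '' σ = τ)
    (hdimσ : Module.finrank ℝ (Submodule.span ℝ σ) = k + 1)
    (hdimτ : Module.finrank ℝ (Submodule.span ℝ τ) = k)
    (hfaces : ∀ τ', IsFace σ τ' → ∃ lam, IsFace τ lam ∧ p '' τ' = lam) :
    Module.finrank ℝ ↥(Submodule.span ℝ σ ⊓ LinearMap.ker p) = 1 ∧
    ({τ' | IsFace σ τ' ∧ Set.InjOn p τ' ∧ p '' τ' = τ}.ncard = 1 ∨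
     {τ' | IsFace σ τ' ∧ Set.InjOn p τ' ∧ p '' τ' = τ}.ncard = 2) := by
  refine relative_dimension_one_faces_general p σ τ hσ.isPolyCone hσsc himg hdimσ hdimτ ?_
  exact fun F hF => let ⟨_, hlam, himgF⟩ := hfaces F hF; himgF ▸ hlam
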